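/- Under the condition λ₁ ≤ ρ_q < (λ₁+λ₂)/2, a point y ∈ ℝ^{n−1} belongs to Y if and only if φ(y) ≤ ρ_q; that is, Y coincides with the sublevel set {y ∈ ℝ^{n−1} : φ(y) ≤ ρ_q}. -/

import Mathlib

open Matrix

noncomputable def Mnorm {n : ℕ} (M : Matrix (Fin n) (Fin n) ℝ) (x : Fin n → ℝ) : ℝ :=
  Real.sqrt (x ⬝ᵥ (M *ᵥ x))

noncomputable def Rq {n : ℕ} (A M : Matrix (Fin n) (Fin n) ℝ) (x : Fin n → ℝ) : ℝ :=
  (x ⬝ᵥ (A *ᵥ x)) / (x ⬝ᵥ (M *ᵥ x))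

/-- ψ(x) = QᵀMx / (qᵀMx) -/
noncomputable def psiMap {n m : ℕ} (M : Matrix (Fin n) (Fin n) ℝ) (q : Fin n → ℝ)
    (Q : Matrix (Fin n) (Fin m) ℝ) (x : Fin n → ℝ) : Fin m → ℝ :=
  (q ⬝ᵥ (M *ᵥ x))⁻¹ • ((Qᵀ * M) *ᵥ x)

/-- ψ†(y) = (Qy + q)/‖Qy + q‖_M -/
noncomputable def psiDag {n m : ℕ} (M : Matrix (Fin n) (Fin n) ℝ) (q : Fin n → ℝ)
    (Q : Matrix (Fin n) (Fin m) ℝ) (y : Fin m → ℝ) : Fin n → ℝ :=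
  (Mnorm M (Q *ᵥ y + q))⁻¹ • (Q *ᵥ y + q)

/-- The hemisphere S₊ = {x : ‖x‖_M = 1, qᵀMx > 0}. -/
def Splus {n : ℕ} (M : Matrix (Fin n) (Fin n) ℝ) (q : Fin n → ℝ) : Set (Fin n → ℝ) :=
  {x | Mnorm M x = 1 ∧ 0 < q ⬝ᵥ (M *ᵥ x)}

/-- X = {x ∈ S₊ : Rq(x) ≤ Rq(q)}. -/
def Xset {n : ℕ} (A M : Matrix (Fin n) (Fin n) ℝ) (q : Fin n → ℝ) : Set (Fin n → ℝ) :=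
  {x | x ∈ Splus M q ∧ Rq A M x ≤ Rq A M q}

/-- φ(y) = (yᵀBy + 2yᵀb + ρ)/(yᵀy + 1). -/
noncomputable def phiAux {m : ℕ} (B : Matrix (Fin m) (Fin m) ℝ) (b : Fin m → ℝ) (ρ : ℝ)
    (y : Fin m → ℝ) : ℝ :=
  (y ⬝ᵥ (B *ᵥ y) + 2 * (y ⬝ᵥ b) + ρ) / (y ⬝ᵥ y + 1)

/-!
The map `ψ` is the central projection of the hemisphere `S₊` to the affine hyperplane `q + range Q`,
read in the coordinates given by `Q`, with inverse `ψ†`. The Rayleigh quotient is invariant under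
scaling, so in these coordinates it is its value at `Q y + q`; expanding the two quadratic forms
there gives `φ`. Hence `ψ` carries the sublevel sets of the Rayleigh quotient in `S₊` to the
sublevel sets of `φ`.
-/

section Homogeneity

variable {n m : ℕ}

theorem Mnorm_smul (M : Matrix (Fin n) (Fin n) ℝ) (c : ℝ) (x : Fin n → ℝ) :
    Mnorm M (c • x) = |c| * Mnorm M x := by
  simp only [Mnorm, mulVec_smul, dotProduct_smul, smul_dotProduct, smul_eq_mul]
  rw [← mul_assoc, Real.sqrt_mul (mul_self_nonneg c), Real.sqrt_mul_self_eq_abs]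

theorem Rq_smul (A M : Matrix (Fin n) (Fin n) ℝ) {c : ℝ} (hc : c ≠ 0) (x : Fin n → ℝ) :
    Rq A M (c • x) = Rq A M x := by
  simp only [Rq, mulVec_smul, dotProduct_smul, smul_dotProduct, smul_eq_mul]
  rw [← mul_assoc, ← mul_assoc, mul_div_mul_left _ _ (mul_ne_zero hc hc)]

theorem psiMap_smul (M : Matrix (Fin n) (Fin n) ℝ) (q : Fin n → ℝ) (Q : Matrix (Fin n) (Fin m) ℝ)
    {c : ℝ} (hc : c ≠ 0) (x : Fin n → ℝ) : psiMap M q Q (c • x) = psiMap M q Q x := by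
  simp only [psiMap, mulVec_smul, dotProduct_smul, smul_smul, smul_eq_mul]
  rw [_root_.mul_inv_rev, inv_mul_cancel_right₀ hc]

end Homogeneity

section QuadraticForm

variable {ι κ R : Type*} [Fintype ι] [Fintype κ] [CommSemiring R]

theorem mulVec_dotProduct_mulVec {μ : Type*} [Fintype μ] (A : Matrix ι μ R) (Q : Matrix ι κ R)
    (y : κ → R) (x : μ → R) :
    (Q *ᵥ y) ⬝ᵥ (A *ᵥ x) = y ⬝ᵥ ((Qᵀ * A) *ᵥ x) := by
  rw [← mulVec_mulVec, dotProduct_transpose_mulVec, dotProduct_comm]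

theorem dotProduct_mulVec_comm_of_isSymm {A : Matrix ι ι R} (hA : A.IsSymm) (x y : ι → R) :
    x ⬝ᵥ (A *ᵥ y) = y ⬝ᵥ (A *ᵥ x) := by
  rw [← dotProduct_transpose_mulVec, hA.eq]

theorem dotProduct_mulVec_affine {A : Matrix ι ι R} (hA : A.IsSymm) (Q : Matrix ι κ R)
    (q : ι → R) (y : κ → R) :
    (Q *ᵥ y + q) ⬝ᵥ (A *ᵥ (Q *ᵥ y + q)) =
      y ⬝ᵥ ((Qᵀ * A * Q) *ᵥ y) + 2 * (y ⬝ᵥ ((Qᵀ * A) *ᵥ q)) + q ⬝ᵥ (A *ᵥ q) := by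
  rw [mulVec_add, dotProduct_add, add_dotProduct, add_dotProduct,
    dotProduct_mulVec_comm_of_isSymm hA q (Q *ᵥ y), mulVec_dotProduct_mulVec,
    mulVec_dotProduct_mulVec, mulVec_mulVec]
  ring

end QuadraticForm

/-- The columns of `[q, Q]` are orthonormal for the symmetric bilinear form `M`, i.e.
`[q, Q]ᵀ M [q, Q] = 1`. The equation is stated blockwise, and by symmetry one off-diagonal block
suffices. The vector `q` is the pole of the hemisphere `Splus M q` projected by `psiMap M q Q`. -/
structure IsOrthonormalFrame {n m : ℕ} (M : Matrix (Fin n) (Fin n) ℝ) (q : Fin n → ℝ)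
    (Q : Matrix (Fin n) (Fin m) ℝ) : Prop where
  isSymm : M.IsSymm
  pole_pole : q ⬝ᵥ (M *ᵥ q) = 1
  frame_pole : (Qᵀ * M) *ᵥ q = 0
  frame_frame : Qᵀ * M * Q = 1

namespace IsOrthonormalFrame

section AnyRank

variable {n m : ℕ} {A M : Matrix (Fin n) (Fin n) ℝ} {q : Fin n → ℝ} {Q : Matrix (Fin n) (Fin m) ℝ}

theorem pole_vecMul_frame (h : IsOrthonormalFrame M q Q) : q ᵥ* M ᵥ* Q = 0 := by
  rw [← mulVec_transpose, ← mulVec_transpose, h.isSymm.eq, mulVec_mulVec, h.frame_pole]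

theorem pole_dotProduct_affine (h : IsOrthonormalFrame M q Q) (y : Fin m → ℝ) :
    q ⬝ᵥ (M *ᵥ (Q *ᵥ y + q)) = 1 := by
  rw [mulVec_add, dotProduct_add, h.pole_pole, dotProduct_mulVec, dotProduct_mulVec,
    h.pole_vecMul_frame, zero_dotProduct, zero_add]

theorem psiMap_affine (h : IsOrthonormalFrame M q Q) (y : Fin m → ℝ) :
    psiMap M q Q (Q *ᵥ y + q) = y := by
  rw [psiMap, h.pole_dotProduct_affine, inv_one, one_smul, mulVec_add, h.frame_pole, add_zero,
    mulVec_mulVec, h.frame_frame, one_mulVec]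

theorem affine_dotProduct_self (h : IsOrthonormalFrame M q Q) (y : Fin m → ℝ) :
    (Q *ᵥ y + q) ⬝ᵥ (M *ᵥ (Q *ᵥ y + q)) = y ⬝ᵥ y + 1 := by
  rw [dotProduct_mulVec_affine h.isSymm, h.frame_frame, h.frame_pole, h.pole_pole, one_mulVec,
    dotProduct_zero, mul_zero, add_zero]

theorem Mnorm_affine_pos (h : IsOrthonormalFrame M q Q) (y : Fin m → ℝ) :
    0 < Mnorm M (Q *ᵥ y + q) := by
  have hy : 0 ≤ y ⬝ᵥ y := dotProduct_self_star_nonneg y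
  rw [Mnorm, h.affine_dotProduct_self]
  exact Real.sqrt_pos.2 (by linarith)

theorem psiDag_mem_Splus (h : IsOrthonormalFrame M q Q) (y : Fin m → ℝ) :
    psiDag M q Q y ∈ Splus M q := by
  have hs := h.Mnorm_affine_pos y
  constructor
  · rw [psiDag, Mnorm_smul, abs_of_pos (inv_pos.2 hs), inv_mul_cancel₀ hs.ne']
  · rw [psiDag, mulVec_smul, dotProduct_smul, h.pole_dotProduct_affine, smul_eq_mul, mul_one]
    exact inv_pos.2 hs

theorem psiMap_psiDag (h : IsOrthonormalFrame M q Q) (y : Fin m → ℝ) :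
    psiMap M q Q (psiDag M q Q y) = y := by
  rw [psiDag, psiMap_smul _ _ _ (inv_ne_zero (h.Mnorm_affine_pos y).ne'), h.psiMap_affine]

theorem image_psiMap_Splus (h : IsOrthonormalFrame M q Q) :
    psiMap M q Q '' Splus M q = Set.univ :=
  Set.eq_univ_of_forall fun y => ⟨_, h.psiDag_mem_Splus y, h.psiMap_psiDag y⟩

theorem Rq_psiDag (h : IsOrthonormalFrame M q Q) (hA : A.IsSymm) (y : Fin m → ℝ) :
    Rq A M (psiDag M q Q y) = phiAux (Qᵀ * A * Q) ((Qᵀ * A) *ᵥ q) (Rq A M q) y := by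
  have hρ : Rq A M q = q ⬝ᵥ (A *ᵥ q) := by rw [Rq, h.pole_pole, div_one]
  rw [psiDag, Rq_smul _ _ (inv_ne_zero (h.Mnorm_affine_pos y).ne'), hρ, Rq, phiAux,
    h.affine_dotProduct_self, dotProduct_mulVec_affine hA]

end AnyRank

section FullRank

variable {m : ℕ} {M : Matrix (Fin (m + 1)) (Fin (m + 1)) ℝ} {q : Fin (m + 1) → ℝ}
  {Q : Matrix (Fin (m + 1)) (Fin m) ℝ}

theorem mulVec_add_smul_pole (h : IsOrthonormalFrame M q Q) (x : Fin (m + 1) → ℝ) :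
    Q *ᵥ ((Qᵀ * M) *ᵥ x) + (q ⬝ᵥ (M *ᵥ x)) • q = x := by
  have left_inv : fromRows (Qᵀ * M) (replicateRow Unit (q ᵥ* M)) *
      fromCols Q (replicateCol Unit q) = 1 := by
    have frame_pole : (Qᵀ * M) * replicateCol Unit q = 0 := by
      rw [← replicateCol_mulVec, h.frame_pole, replicateCol_zero]
    have pole_frame : replicateRow Unit (q ᵥ* M) * Q = 0 := by
      rw [← replicateRow_vecMul, h.pole_vecMul_frame, replicateRow_zero]
    have pole_pole : replicateRow Unit (q ᵥ* M) * replicateCol Unit q = 1 := by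
      ext
      exact (dotProduct_mulVec q M q).symm.trans h.pole_pole
    rw [fromRows_mul_fromCols, h.frame_frame, frame_pole, pole_frame, pole_pole, fromBlocks_one]
  have right_inv : fromCols Q (replicateCol Unit q) *
      fromRows (Qᵀ * M) (replicateRow Unit (q ᵥ* M)) = 1 :=
    (mul_eq_one_comm_of_card_eq _ _ _ (by simp)).1 left_inv
  rw [fromCols_mul_fromRows, ← vecMulVec_eq] at right_inv
  simpa only [add_mulVec, ← mulVec_mulVec, vecMulVec_mulVec, ← dotProduct_mulVec, one_mulVec,
    op_smul_eq_smul] using congrArg (· *ᵥ x) right_inv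

theorem mulVec_psiMap_add_pole (h : IsOrthonormalFrame M q Q) {x : Fin (m + 1) → ℝ}
    (hx : q ⬝ᵥ (M *ᵥ x) ≠ 0) : Q *ᵥ psiMap M q Q x + q = (q ⬝ᵥ (M *ᵥ x))⁻¹ • x := by
  rw [eq_inv_smul_iff₀ hx, smul_add, psiMap, mulVec_smul, smul_inv_smul₀ hx,
    h.mulVec_add_smul_pole]

theorem leftInvOn_psiDag_psiMap (h : IsOrthonormalFrame M q Q) :
    Set.LeftInvOn (psiDag M q Q) (psiMap M q Q) (Splus M q) := by
  rintro x ⟨hx_norm, hx_pos⟩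
  rw [psiDag, h.mulVec_psiMap_add_pole hx_pos.ne', Mnorm_smul, hx_norm, mul_one,
    abs_of_pos (inv_pos.2 hx_pos), inv_inv, smul_inv_smul₀ hx_pos.ne']

theorem image_psiMap_Splus_inter (h : IsOrthonormalFrame M q Q) (s : Set (Fin (m + 1) → ℝ)) :
    psiMap M q Q '' (Splus M q ∩ s) = psiDag M q Q ⁻¹' s := by
  rw [Set.inter_comm, h.leftInvOn_psiDag_psiMap.image_inter', h.image_psiMap_Splus, Set.inter_univ]

end FullRank

end IsOrthonormalFrame

theorem stmt_2_general {m : ℕ} {A M : Matrix (Fin (m + 1)) (Fin (m + 1)) ℝ} (hA : A.IsSymm)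
    {q : Fin (m + 1) → ℝ} {Q : Matrix (Fin (m + 1)) (Fin m) ℝ} (h : IsOrthonormalFrame M q Q) :
    psiMap M q Q '' Xset A M q =
      {y | phiAux (Qᵀ * A * Q) ((Qᵀ * A) *ᵥ q) (Rq A M q) y ≤ Rq A M q} :=
  calc psiMap M q Q '' Xset A M q
      = psiMap M q Q '' (Splus M q ∩ {x | Rq A M x ≤ Rq A M q}) := rfl
    _ = {y | Rq A M (psiDag M q Q y) ≤ Rq A M q} := h.image_psiMap_Splus_inter _
    _ = {y | phiAux (Qᵀ * A * Q) ((Qᵀ * A) *ᵥ q) (Rq A M q) y ≤ Rq A M q} := by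
      simp only [h.Rq_psiDag hA]

/-- Under λ₁ ≤ ρ_q < (λ₁+λ₂)/2, Y = ψ(X) coincides with the sublevel set
{y : φ(y) ≤ ρ_q}. -/
theorem stmt_2 (n : ℕ)
    (A M : Matrix (Fin (n+2)) (Fin (n+2)) ℝ)
    (hA : A.PosDef) (hM : M.PosDef)
    (q : Fin (n+2) → ℝ) (Q : Matrix (Fin (n+2)) (Fin (n+1)) ℝ)
    (hq1 : q ⬝ᵥ (M *ᵥ q) = 1)
    (hQMQ : Qᵀ * M * Q = 1)
    (hQMq : (Qᵀ * M) *ᵥ q = 0)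
    (lam : Fin (n+2) → ℝ) (u : Fin (n+2) → Fin (n+2) → ℝ)
    (hlam0 : 0 < lam 0) (hlam01 : lam 0 < lam 1) (hmono : Monotone lam)
    (heig : ∀ i, A *ᵥ u i = lam i • (M *ᵥ u i))
    (horth : ∀ i j, u i ⬝ᵥ (M *ᵥ u j) = if i = j then (1:ℝ) else 0)
    (hqu1 : 0 < q ⬝ᵥ (M *ᵥ u 0))
    (B : Matrix (Fin (n+1)) (Fin (n+1)) ℝ) (hB : B = Qᵀ * A * Q)
    (b : Fin (n+1) → ℝ) (hb : b = (Qᵀ * A) *ᵥ q)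
    (ρq : ℝ) (hρq : ρq = Rq A M q)
    (hρ1 : lam 0 ≤ ρq) (hρ2 : ρq < (lam 0 + lam 1) / 2) :
    psiMap M q Q '' (Xset A M q) = {y : Fin (n+1) → ℝ | phiAux B b ρq y ≤ ρq} := by
  subst hB hb hρq
  exact stmt_2_general (isHermitian_iff_isSymm.1 hA.isHermitian)
    ⟨isHermitian_iff_isSymm.1 hM.isHermitian, hq1, hQMq, hQMQ⟩
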